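/- Let d = 2^n, let x ∈ ℝ^d, let G be a d×d matrix with i.i.d. N(0,1) entries and z = Gx, and let y = √d·H·D_1·H·D_2·x where H is the normalized Walsh–Hadamard matrix and D_1, D_2 are independent random sign diagonal matrices. Then for every differentiable function g : ℝ → ℝ with |g(t)| ≤ 1 and |g'(t)| ≤ 1 for all t, |(1/d)·Σ_{i=1}^d E[g(z(i))] − (1/d)·Σ_{i=1}^d E[g(y(i))]| ≤ 6‖x‖₂/√d. -/

import Mathlib

open MeasureTheory ProbabilityTheory Real

/-- The Rademacher distribution on `ℝ`: `±1` each with probability `1/2`. -/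
noncomputable def rademacher : Measure ℝ :=
  (2 : ENNReal)⁻¹ • Measure.dirac 1 + (2 : ENNReal)⁻¹ • Measure.dirac (-1)

/-- The normalized Walsh–Hadamard matrix of size `2^n`: entry `(i,j)` is
`(−1)^{⟨i,j⟩}/√(2^n)` where `⟨i,j⟩` is the inner product of the binary representations of
the (0-indexed) `i` and `j`. -/
noncomputable def hadamardMatrix (n : ℕ) : Matrix (Fin (2 ^ n)) (Fin (2 ^ n)) ℝ :=
  Matrix.of fun i j =>
    (-1 : ℝ) ^ (∑ k : Fin n, ((i : ℕ).testBit k).toNat * ((j : ℕ).testBit k).toNat) /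
      Real.sqrt (2 ^ n)


open Filter Topology Set in
lemma aux_compare (F B F' B' : ℝ → ℝ) (a : ℝ)
    (hF : ∀ t, a ≤ t → HasDerivAt F (F' t) t) (hB : ∀ t, a ≤ t → HasDerivAt B (B' t) t)
    (h : ∀ t, a ≤ t → |F' t| ≤ - B' t)
    (hF0 : Tendsto F atTop (𝓝 0)) (hB0 : Tendsto B atTop (𝓝 0)) : |F a| ≤ B a := by
  have key : ∀ (D D' : ℝ → ℝ), (∀ t, a ≤ t → HasDerivAt D (D' t) t) →
      (∀ t, a ≤ t → D' t ≤ 0) → Tendsto D atTop (𝓝 0) → 0 ≤ D a := by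
    intro D D' hD hD' hD0
    have anti : AntitoneOn D (Ici a) := by
      apply antitoneOn_of_deriv_nonpos (convex_Ici a)
      · exact fun t ht => (hD t ht).continuousAt.continuousWithinAt
      · intro t ht
        rw [interior_Ici] at ht
        exact (hD t (le_of_lt ht)).differentiableAt.differentiableWithinAt
      · intro t ht
        rw [interior_Ici] at ht
        rw [(hD t (le_of_lt ht)).deriv]
        exact hD' t (le_of_lt ht)
    refine le_of_tendsto hD0 ?_
    filter_upwards [eventually_ge_atTop a] with t ht
    exact anti self_mem_Ici ht ht
  have h1 := key (fun t => B t - F t) (fun t => B' t - F' t)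
    (fun t ht => (hB t ht).sub (hF t ht))
    (fun t ht => by have := abs_le.1 (h t ht); linarith) (by simpa using hB0.sub hF0)
  have h2 := key (fun t => B t + F t) (fun t => B' t + F' t)
    (fun t ht => (hB t ht).add (hF t ht))
    (fun t ht => by have := abs_le.1 (h t ht); linarith) (by simpa using hB0.add hF0)
  rw [abs_le]; constructor <;> linarith

open Filter Topology in
lemma aux_exp_tendsto : Tendsto (fun w : ℝ => exp (-w^2/2)) atTop (𝓝 0) := by
  apply tendsto_exp_atBot.comp
  have : Tendsto (fun w : ℝ => w^2/2) atTop atTop :=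
    (tendsto_pow_atTop (by norm_num)).atTop_div_const (by norm_num)
  exact (tendsto_neg_atTop_atBot.comp this).congr fun w => by simp [neg_div]

open Filter Topology in
lemma aux_mul_exp_tendsto : Tendsto (fun w : ℝ => w * exp (-w^2/2)) atTop (𝓝 0) := by
  have h := (tendsto_pow_mul_exp_neg_atTop_nhds_zero 1)
  refine squeeze_zero' (g := fun w : ℝ => w^1 * exp (-w)) ?_ ?_ h
  · filter_upwards [eventually_ge_atTop 0] with t ht
    positivity
  · filter_upwards [eventually_ge_atTop 2] with t ht
    rw [pow_one]
    gcongr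
    nlinarith

lemma aux_exp_deriv (t : ℝ) : HasDerivAt (fun w : ℝ => exp (-w^2/2)) (-t * exp (-t^2/2)) t := by
  have : HasDerivAt (fun w : ℝ => -w^2/2) (-t) t := by
    have := ((hasDerivAt_pow 2 t).neg).div_const 2
    convert! this using 1; simp; ring
  convert! this.exp using 1; ring

open Filter Topology in
/-- First bound -/
lemma aux_bound1 (u r : ℝ → ℝ) (hu : ∀ t, 0 ≤ t → HasDerivAt u (t * u t + r t) t)
    (hr : ∀ t, 0 ≤ t → |r t| ≤ t + 1)
    (h0 : Tendsto (fun w => exp (-w^2/2) * u w) atTop (𝓝 0)) (w : ℝ) (hw : 0 ≤ w) :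
    |u w| ≤ 1 + √2 := by
  have s2 : √2 * √2 = 2 := by norm_num
  have s0 : 0 < √2 := by positivity
  have h := aux_compare (fun w => exp (-w^2/2) * u w)
    (fun w => exp (-w^2/2) * (1 + 2 / (w + √2)))
    (fun t => exp (-t^2/2) * r t)
    (fun t => -t * exp (-t^2/2) * (1 + 2/(t+√2)) + exp (-t^2/2) * (-2/(t+√2)^2)) w ?_ ?_ ?_ h0 ?_
  · beta_reduce at h
    rw [abs_mul, abs_of_pos (exp_pos _)] at h
    have h3 := le_of_mul_le_mul_left h (exp_pos _)
    have : 2 / (w + √2) ≤ √2 := by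
      rw [div_le_iff₀ (by positivity)]; nlinarith
    linarith
  · intro t ht
    have := (aux_exp_deriv t).mul (hu t (hw.trans ht))
    convert! this using 1; ring
  · intro t ht
    have htp : t + √2 ≠ 0 := by have := hw.trans ht; positivity
    have h2 : HasDerivAt (fun w : ℝ => 1 + 2/(w+√2)) (-2/(t+√2)^2) t := by
      have := (((hasDerivAt_const t (2:ℝ)).div ((hasDerivAt_id t).add_const (√2)) htp)).const_add 1
      convert! this using 1; simp
    exact (aux_exp_deriv t).mul h2
  · intro t ht
    have ht0 := hw.trans ht
    rw [abs_mul, abs_of_pos (exp_pos _)]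
    have : |r t| ≤ t * (1 + 2/(t+√2)) + 2/(t+√2)^2 := by
      refine (hr t ht0).trans ?_
      have : 1 ≤ t * (2/(t+√2)) + 2/(t+√2)^2 := by
        have hp : 0 < t + √2 := by positivity
        have e : t * (2/(t+√2)) + 2/(t+√2)^2 = (2 * t * (t + √2) + 2) / (t+√2)^2 := by
          field_simp
        rw [e, le_div_iff₀ (by positivity)]
        nlinarith [sq_nonneg t]
      linarith
    calc _ ≤ exp (-t^2/2) * (t * (1 + 2/(t+√2)) + 2/(t+√2)^2) := by gcongr
      _ = _ := by ring
  · have h2 : Tendsto (fun w : ℝ => 1 + 2 / (w + √2)) atTop (𝓝 (1 + 0)) := by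
      apply Tendsto.const_add
      exact Tendsto.const_div_atTop (tendsto_atTop_add_const_right _ _ tendsto_id) _
    simpa using aux_exp_tendsto.mul h2

open Filter Topology in
/-- Second bound -/
lemma aux_bound2 (u r : ℝ → ℝ) (R : ℝ) (hu : ∀ t, 0 ≤ t → HasDerivAt u (t * u t + r t) t)
    (hr : ∀ t, 0 ≤ t → |r t| ≤ R)
    (h0 : Tendsto (fun w => exp (-w^2/2) * u w) atTop (𝓝 0)) (w : ℝ) (hw : 0 ≤ w) :
    |w * u w| ≤ R := by
  have hR : 0 ≤ R := (abs_nonneg _).trans (hr w hw)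
  rcases hw.eq_or_lt with rfl | hw'
  · simpa using hR
  have h := aux_compare (fun w => exp (-w^2/2) * u w)
    (fun w => exp (-w^2/2) * (R / w))
    (fun t => exp (-t^2/2) * r t)
    (fun t => -t * exp (-t^2/2) * (R/t) + exp (-t^2/2) * (-R/t^2)) w ?_ ?_ ?_ h0 ?_
  · beta_reduce at h
    rw [abs_mul, abs_of_pos (exp_pos _)] at h
    have h3 := le_of_mul_le_mul_left h (exp_pos _)
    rw [le_div_iff₀ hw'] at h3
    rw [abs_mul, abs_of_pos hw']; linarith
  · intro t ht
    have := (aux_exp_deriv t).mul (hu t (hw.trans ht))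
    convert! this using 1; ring
  · intro t ht
    have htp : t ≠ 0 := by have := hw'.trans_le ht; positivity
    have h2 : HasDerivAt (fun w : ℝ => R/w) (-R/t^2) t := by
      have := (((hasDerivAt_const t R).div ((hasDerivAt_id t)) htp))
      convert! this using 1; simp
    exact (aux_exp_deriv t).mul h2
  · intro t ht
    have ht0 := hw'.trans_le ht
    rw [abs_mul, abs_of_pos (exp_pos _)]
    have : |r t| ≤ t * (R/t) + R/t^2 := by
      refine (hr t ht0.le).trans ?_
      rw [mul_div_cancel₀ _ ht0.ne']
      have : 0 ≤ R / t^2 := by positivity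
      linarith
    calc _ ≤ exp (-t^2/2) * (t * (R/t) + R/t^2) := by gcongr
      _ = _ := by ring
  · have h2 : Tendsto (fun w : ℝ => R / w) atTop (𝓝 0) := 
      Tendsto.const_div_atTop tendsto_id _
    simpa using aux_exp_tendsto.mul h2

open Filter Topology in
/-- Combined bound on the half-line -/
lemma aux_half (f p k k' : ℝ → ℝ) (hf : ∀ t, HasDerivAt f (p t) t)
    (hp : ∀ t, p t = t * f t + k t) (hk : ∀ t, HasDerivAt k (k' t) t)
    (hk1 : ∀ t, 0 ≤ t → |k t| ≤ t + 1) (hk' : ∀ t, |k' t| ≤ 1)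
    (h0 : Tendsto (fun w => exp (-w^2/2) * f w) atTop (𝓝 0)) (w : ℝ) (hw : 0 ≤ w) :
    |f w + w * p w + k' w| ≤ 2 * (2 + √2) := by
  have b1 : ∀ t, 0 ≤ t → |f t| ≤ 1 + √2 := fun t ht =>
    aux_bound1 f k (fun t _ => by rw [← hp]; exact hf t) hk1 h0 t ht
  have hr : ∀ t, 0 ≤ t → |f t + k' t| ≤ 2 + √2 := fun t ht => by
    have := abs_add_le (f t) (k' t)
    linarith [b1 t ht, hk' t]
  have hp' : ∀ t, HasDerivAt p (t * p t + (f t + k' t)) t := fun t => by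
    have : HasDerivAt (fun t => t * f t + k t) (1 * f t + t * p t + k' t) t :=
      ((hasDerivAt_id t).mul (hf t)).add (hk t)
    rw [show p = fun t => t * f t + k t from funext hp]
    convert! this using 1
    try simp only [hp]
    ring
  have hp0 : Tendsto (fun w => exp (-w^2/2) * p w) atTop (𝓝 0) := by
    have lim : Tendsto (fun w : ℝ => (2 + √2) * (w * exp (-w^2/2)) + exp (-w^2/2)) atTop (𝓝 0) := by
      simpa using (aux_mul_exp_tendsto.const_mul (2+√2)).add aux_exp_tendsto
    refine squeeze_zero_norm' ?_ lim
    filter_upwards [eventually_ge_atTop 0] with t ht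
    rw [norm_mul, norm_eq_abs, norm_eq_abs, abs_of_pos (exp_pos _), hp]
    have h1 : |t * f t + k t| ≤ t * (1 + √2) + (t + 1) := by
      refine (abs_add_le _ _).trans ?_
      rw [abs_mul, abs_of_nonneg ht]
      have := mul_le_mul_of_nonneg_left (b1 t ht) ht
      linarith [hk1 t ht]
    calc _ ≤ exp (-t^2/2) * (t * (1 + √2) + (t + 1)) := by gcongr
      _ = _ := by ring
  have b2 := aux_bound2 p _ _ (fun t _ => hp' t) hr hp0 w hw
  have b3 := hr w hw
  rw [abs_le] at *
  constructor <;> linarith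

open Filter Topology in
lemma aux_full (f p k k' : ℝ → ℝ) (hf : ∀ t, HasDerivAt f (p t) t)
    (hp : ∀ t, p t = t * f t + k t) (hk : ∀ t, HasDerivAt k (k' t) t)
    (hk1 : ∀ t, |k t| ≤ |t| + 1) (hk' : ∀ t, |k' t| ≤ 1)
    (h0 : Tendsto (fun w => exp (-w^2/2) * f w) atTop (𝓝 0))
    (h0' : Tendsto (fun w => exp (-w^2/2) * f w) atBot (𝓝 0)) (w : ℝ) :
    |f w + w * p w + k' w| ≤ 2 * (2 + √2) := by
  rcases le_total 0 w with hw | hw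
  · exact aux_half f p k k' hf hp hk (fun t ht => by simpa [abs_of_nonneg ht] using hk1 t) hk' h0 w hw
  · have := aux_half (fun t => - f (-t)) (fun t => p (-t)) (fun t => k (-t)) (fun t => - k' (-t))
      (fun t => by
        have := ((hf (-t)).comp t (hasDerivAt_neg t)).neg
        convert! this using 1; ring)
      (fun t => by rw [hp]; ring)
      (fun t => by
        have := ((hk (-t)).comp t (hasDerivAt_neg t))
        convert! this using 1; ring)
      (fun t ht => by simpa [abs_of_nonneg ht] using hk1 (-t))
      (fun t => by simpa using hk' (-t))
      (by
        have := (h0'.comp tendsto_neg_atTop_atBot).neg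
        simpa [Function.comp_def] using this) (-w) (by linarith)
    simp only [neg_neg] at this
    rw [← abs_neg]
    convert! this using 2; ring

lemma aux_gauss_abs (g : ℝ → ℝ) (hg : Differentiable ℝ g) (M : ℝ)
    (hM : ∀ t, |g t| ≤ M) (hg2 : ∀ t, |deriv g t| ≤ 1) :
    (∀ s t, |g s - g t| ≤ |s - t|) ∧ |g 0 - ∫ t, g t ∂(gaussianReal 0 1)| ≤ 1 := by
  have lip : ∀ s t, |g s - g t| ≤ |s - t| := by
    intro s t
    have := Convex.norm_image_sub_le_of_norm_deriv_le (f := g) (s := Set.univ) (x := t) (y := s) (C := 1)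
      (fun x _ => hg x) (fun x _ => hg2 x) convex_univ trivial trivial
    simpa using this
  refine ⟨lip, ?_⟩
  have ig : Integrable g (gaussianReal 0 1) :=
    Integrable.of_bound hg.continuous.aestronglyMeasurable M (ae_of_all _ hM)
  have m2 := memLp_id_gaussianReal' (μ := 0) (v := 1) 2 (by norm_num)
  have i2 : Integrable (fun t : ℝ => t^2) (gaussianReal 0 1) := m2.integrable_sq
  have e2 : ∫ t, t^2 ∂(gaussianReal 0 1) = 1 := by
    have := variance_id_gaussianReal (μ := 0) (v := 1)
    rw [variance_of_integral_eq_zero (by fun_prop) (by simp)] at this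
    simpa using this
  have : g 0 - ∫ t, g t ∂(gaussianReal 0 1) = ∫ t, (g 0 - g t) ∂(gaussianReal 0 1) := by
    rw [integral_sub (by fun_prop) ig]; simp
  rw [this]
  calc _ ≤ ∫ t, |g 0 - g t| ∂(gaussianReal 0 1) := abs_integral_le_integral_abs
    _ ≤ ∫ t, (1/2 + t^2/2) ∂(gaussianReal 0 1) := by
      apply integral_mono_of_nonneg (ae_of_all _ fun _ => abs_nonneg _)
      · exact (integrable_const _).add (i2.div_const 2)
      · refine ae_of_all _ fun t => ?_
        have h1 := lip 0 t
        simp only [zero_sub, abs_neg] at h1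
        have := sq_nonneg (|t| - 1)
        have := sq_abs t
        simp only
        nlinarith
    _ = 1 := by
      have := integral_add (integrable_const (1/2 : ℝ)) (i2.div_const 2)
      rw [this, integral_div 2 (fun t : ℝ => t^2), e2]; simp; norm_num

open Filter Topology Set in
/-- Existence of the Stein solution with Lipschitz derivative. -/
lemma aux_stein (g : ℝ → ℝ) (hg : Differentiable ℝ g) (M : ℝ)
    (hM : ∀ t, |g t| ≤ M) (hg2 : ∀ t, |deriv g t| ≤ 1) :
    ∃ f p q : ℝ → ℝ, (∀ t, HasDerivAt f (p t) t) ∧ (∀ t, HasDerivAt p (q t) t) ∧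
      (∀ t, |q t| ≤ 2 * (2 + √2)) ∧
      ∀ t, p t - t * f t = g t - ∫ t, g t ∂(gaussianReal 0 1) := by
  obtain ⟨lip, hc⟩ := aux_gauss_abs g hg M hM hg2
  set c := ∫ t, g t ∂(gaussianReal 0 1) with hcdef
  have ig : Integrable g (gaussianReal 0 1) :=
    Integrable.of_bound hg.continuous.aestronglyMeasurable M (ae_of_all _ hM)
  let h : ℝ → ℝ := fun t => exp (-t^2/2) * (g t - c)
  have hcont : Continuous h := by
    have := hg.continuous
    fun_prop
  have hint : Integrable h := by
    have : Integrable (fun t : ℝ => exp (-t^2/2)) := by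
      have := integrable_exp_neg_mul_sq (b := 1/2) (by norm_num)
      convert! this using 3; ring
    refine this.mul_bdd (c := M + |c|) (by have := hg.continuous; fun_prop) (ae_of_all _ fun t => ?_)
    have := abs_sub (g t) c
    rw [norm_eq_abs]
    linarith [hM t]
  have htot : ∫ t, h t = 0 := by
    have h1 : ∫ t, (g t - c) ∂(gaussianReal 0 1) = 0 := by
      rw [integral_sub ig (integrable_const _)]; simp [hcdef]
    rw [integral_gaussianReal_eq_integral_smul (by norm_num)] at h1
    simp only [gaussianPDFReal, smul_eq_mul, sub_zero, NNReal.coe_one, mul_one, mul_assoc] at h1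
    rw [integral_const_mul] at h1
    rcases mul_eq_zero.1 h1 with h2 | h2
    · exfalso
      have : 0 < (√(2 * π))⁻¹ := by positivity
      exact this.ne' h2
    · exact h2
  let A := ∫ t in Iic (0:ℝ), h t
  let F : ℝ → ℝ := fun w => (∫ t in (0:ℝ)..w, h t) + A
  have hF : ∀ t, HasDerivAt F (h t) t := fun t =>
    (intervalIntegral.integral_hasDerivAt_right (hcont.intervalIntegrable _ _)
      (hcont.stronglyMeasurableAtFilter _ _) hcont.continuousAt).add_const A
  have hA : (∫ t in Ioi (0:ℝ), h t) + A = 0 := by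
    have := intervalIntegral.integral_Iic_add_Ioi (b := (0:ℝ)) hint.integrableOn hint.integrableOn
    rw [htot] at this
    linarith
  have T1 : Tendsto F atTop (𝓝 0) := by
    rw [← hA]
    exact (intervalIntegral_tendsto_integral_Ioi 0 hint.integrableOn tendsto_id).add_const A
  have T2 : Tendsto F atBot (𝓝 0) := by
    have := (intervalIntegral_tendsto_integral_Iic 0 hint.integrableOn tendsto_id).neg.add_const A
    simp only [id] at this
    rw [show -(∫ t in Iic (0:ℝ), h t) + A = 0 by simp [A]] at this
    refine this.congr fun w => ?_
    simp only [F]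
    rw [intervalIntegral.integral_symm w 0]
  let f : ℝ → ℝ := fun w => exp (w^2/2) * F w
  let p : ℝ → ℝ := fun w => w * f w + (g w - c)
  have hf : ∀ t, HasDerivAt f (p t) t := fun t => by
    have e1 : HasDerivAt (fun w : ℝ => exp (w^2/2)) (exp (t^2/2) * t) t := by
      have : HasDerivAt (fun w : ℝ => w^2/2) t t := by
        have := ((hasDerivAt_pow 2 t)).div_const 2
        convert! this using 1; simp
      exact this.exp
    convert! e1.mul (hF t) using 1
    simp only [p, f, h, ← mul_assoc, ← exp_add]
    rw [show t^2/2 + -t^2/2 = 0 by ring, exp_zero]; ring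
  have hfF : (fun w => exp (-w^2/2) * f w) = F := by
    funext w
    simp only [f, ← mul_assoc, ← exp_add]
    rw [show -w^2/2 + w^2/2 = 0 by ring, exp_zero, one_mul]
  have hk : ∀ t, HasDerivAt (fun t => g t - c) (deriv g t) t := fun t => (hg t).hasDerivAt.sub_const c
  refine ⟨f, p, fun t => f t + t * p t + deriv g t, hf, fun t => ?_, fun t => ?_, fun t => ?_⟩
  · convert! ((hasDerivAt_id t).mul (hf t)).add (hk t) using 1
    simp
  · refine aux_full f p (fun t => g t - c) (deriv g) hf (fun _ => rfl) hk ?_ hg2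
      (by rw [hfF]; exact T1) (by rw [hfF]; exact T2) t
    intro t
    have := abs_add_le (g t - g 0) (g 0 - c)
    have := lip t 0
    simp only [sub_zero] at this
    rw [show g t - c = (g t - g 0) + (g 0 - c) by ring]
    linarith
  · simp [p]

lemma aux_trap (f p q : ℝ → ℝ) (L : ℝ) (hf : ∀ t, HasDerivAt f (p t) t)
    (hp : ∀ t, HasDerivAt p (q t) t) (hq : ∀ t, |q t| ≤ L) (m s : ℝ) :
    |f (m + s) - f (m - s) - s * (p (m + s) + p (m - s))| ≤ L * s^2 := by
  have pos : ∀ s, 0 ≤ s → |f (m + s) - f (m - s) - s * (p (m + s) + p (m - s))| ≤ L * s^2 := by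
    intro s hs
    have hd : ∀ s, HasDerivAt (fun s => f (m + s) - f (m - s) - s * (p (m + s) + p (m - s)))
        (-s * (q (m+s) - q (m-s))) s := fun s => by
      have d1 : HasDerivAt (fun s => m + s) 1 s := (hasDerivAt_id s).const_add m
      have d2 : HasDerivAt (fun s => m - s) (-1) s := (hasDerivAt_id s).const_sub m
      have := (((hf (m+s)).comp s d1).sub ((hf (m-s)).comp s d2)).sub
        ((hasDerivAt_id s).mul (((hp (m+s)).comp s d1).add ((hp (m-s)).comp s d2)))
      convert! this using 1
      simp only [Pi.add_apply, Function.comp, id]; ring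
    have := image_norm_le_of_norm_deriv_right_le_deriv_boundary (a := 0) (b := s)
      (f := fun s => f (m + s) - f (m - s) - s * (p (m + s) + p (m - s)))
      (f' := fun s => (-s * (q (m+s) - q (m-s))))
      (B := fun s => L * s^2) (B' := fun s => 2 * L * s)
      (fun t _ => (hd t).continuousAt.continuousWithinAt)
      (fun t _ => (hd t).hasDerivWithinAt) (by simp)
      (fun t => by
        have := (hasDerivAt_pow 2 t).const_mul L
        convert! this using 1; simp; ring)
      (fun t ht => by
        rw [norm_eq_abs, abs_mul, abs_neg, abs_of_nonneg ht.1]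
        have := abs_sub (q (m+t)) (q (m-t))
        have h2 := hq (m+t)
        have h3 := hq (m-t)
        have : |q (m+t) - q (m-t)| ≤ 2 * L := by linarith
        nlinarith [mul_le_mul_of_nonneg_left this ht.1])
    exact this (Set.right_mem_Icc.2 hs)
  rcases le_total 0 s with hs | hs
  · exact pos s hs
  · have := pos (-s) (by linarith)
    rw [← abs_neg]
    simp only [sub_neg_eq_add, ← sub_eq_add_neg, neg_sq] at this
    convert! this using 2; ring

instance aux_rad_prob : IsProbabilityMeasure rademacher := by
  constructor
  simp [rademacher, ENNReal.inv_two_add_inv_two]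

lemma aux_rad_neg : MeasurePreserving (fun t : ℝ => -t) rademacher rademacher := by
  refine ⟨measurable_neg, ?_⟩
  unfold rademacher
  rw [Measure.map_add _ _ measurable_neg, Measure.map_smul, Measure.map_smul,
    Measure.map_dirac' measurable_neg, Measure.map_dirac' measurable_neg, neg_neg, add_comm]

lemma aux_rad_ae : ∀ᵐ t ∂rademacher, t^2 = 1 := by
  have hm : MeasurableSet {t : ℝ | t^2 = 1} := measurableSet_eq_fun (by fun_prop) (by fun_prop)
  unfold rademacher
  rw [ae_add_measure_iff]
  constructor
  · apply Measure.ae_smul_measure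
    rw [ae_dirac_iff hm]; norm_num
  · apply Measure.ae_smul_measure
    rw [ae_dirac_iff hm]; norm_num

/-- product of Rademacher measures -/
noncomputable def radPi (ι : Type) [Fintype ι] : Measure (ι → ℝ) :=
  Measure.pi fun _ : ι => rademacher

instance aux_radPi_prob (ι : Type) [Fintype ι] : IsProbabilityMeasure (radPi ι) := by
  unfold radPi; infer_instance

lemma aux_radPi_ae (ι : Type) [Fintype ι] : ∀ᵐ e ∂(radPi ι), ∀ i, (e i)^2 = 1 := by
  rw [ae_all_iff]
  intro i
  exact (measurePreserving_eval (fun _ : ι => rademacher) i).quasiMeasurePreserving.ae aux_rad_ae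

lemma aux_radPi_int {ι : Type} [Fintype ι] (φ : (ι → ℝ) → ℝ) (h : Continuous φ) :
    Integrable φ (radPi ι) := by
  have hK : IsCompact (Set.Icc (fun _ : ι => (-1:ℝ)) (fun _ => 1)) := isCompact_Icc
  have h1 : IntegrableOn φ (Set.Icc (fun _ : ι => (-1:ℝ)) (fun _ => 1)) (radPi ι) :=
    h.continuousOn.integrableOn_compact hK
  rw [IntegrableOn, Measure.restrict_eq_self_of_ae_mem] at h1
  · exact h1
  · filter_upwards [aux_radPi_ae ι] with e he
    refine ⟨fun i => ?_, fun i => ?_⟩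
    · exact (abs_le.1 ((sq_le_one_iff_abs_le_one _).1 (he i).le)).1
    · exact (abs_le.1 ((sq_le_one_iff_abs_le_one _).1 (he i).le)).2

lemma aux_flip {ι : Type} [Fintype ι] [DecidableEq ι] (j : ι) (φ : (ι → ℝ) → ℝ)
    (h : Continuous φ) :
    ∫ e, φ e ∂(radPi ι) = ∫ e, φ (Function.update e j (- e j)) ∂(radPi ι) := by
  have mp : MeasurePreserving (fun (e : ι → ℝ) => Function.update e j (- e j))
      (radPi ι) (radPi ι) := by
    have := measurePreserving_pi (fun _ : ι => rademacher) (fun _ : ι => rademacher)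
      (f := fun i t => if i = j then -t else t) (fun i => by
        by_cases hi : i = j
        · simpa [hi] using aux_rad_neg
        · simp only [hi, if_false]
          exact MeasurePreserving.id rademacher)
    convert! this using 1
    funext e i
    by_cases hi : i = j
    · subst hi; simp
    · simp [hi]
  conv_lhs => rw [← mp.map_eq]
  rw [integral_map mp.measurable.aemeasurable h.aestronglyMeasurable]

lemma aux_sum_flip {ι : Type} [Fintype ι] [DecidableEq ι] (j : ι) (a e : ι → ℝ) :
    ∑ i, Function.update e j (- e j) i * a i = ∑ i, e i * a i - 2 * (e j * a j) := by
  have : ∀ i, Function.update e j (- e j) i * a i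
      = e i * a i - if i = j then 2 * (e j * a j) else 0 := by
    intro i
    by_cases hi : i = j
    · subst hi; simp; ring
    · simp [hi]
  simp_rw [this]
  rw [Finset.sum_sub_distrib]
  simp

/-- symmetrised form of `E[φ(S)]` -/
lemma aux_sym1 {ι : Type} [Fintype ι] (j : ι) (a : ι → ℝ) (φ : ℝ → ℝ) (h : Continuous φ) :
    ∫ e, φ (∑ i, e i * a i) ∂(radPi ι) = ∫ e, (φ (∑ i, e i * a i)
      + φ (∑ i, e i * a i - 2 * (e j * a j))) / 2 ∂(radPi ι) := by
  classical
  have h1 := aux_flip j (fun e => φ (∑ i, e i * a i)) (by fun_prop)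
  simp only [aux_sum_flip] at h1
  rw [integral_div, integral_add (aux_radPi_int _ (by fun_prop)) (aux_radPi_int _ (by fun_prop)),
    ← h1]
  ring

/-- symmetrised form of `E[h φ(S)]` -/
lemma aux_sym2 {ι : Type} [Fintype ι] (j : ι) (a : ι → ℝ) (φ : ℝ → ℝ) (h : Continuous φ) :
    ∫ e, (e j * a j) * φ (∑ i, e i * a i) ∂(radPi ι) = ∫ e, (e j * a j) * (φ (∑ i, e i * a i)
      - φ (∑ i, e i * a i - 2 * (e j * a j))) / 2 ∂(radPi ι) := by
  classical
  have h1 := aux_flip j (fun e => (e j * a j) * φ (∑ i, e i * a i)) (by fun_prop)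
  simp only [aux_sum_flip, Function.update_self] at h1
  simp only [mul_sub]
  rw [integral_div, integral_sub (aux_radPi_int _ (by fun_prop)) (aux_radPi_int _ (by fun_prop))]
  simp only [neg_mul, integral_neg] at h1
  linarith

/-- Stein bound for Rademacher sums, unit variance -/
lemma aux_clt1 {ι : Type} [Fintype ι] (a : ι → ℝ) (ha : ∑ i, a i ^ 2 = 1)
    (g : ℝ → ℝ) (hg : Differentiable ℝ g) (M : ℝ)
    (hM : ∀ t, |g t| ≤ M) (hg2 : ∀ t, |deriv g t| ≤ 1) :
    |∫ e, g (∑ i, e i * a i) ∂(radPi ι) - ∫ t, g t ∂(gaussianReal 0 1)|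
      ≤ (2 + √2) * ∑ i, |a i| ^ 3 := by
  obtain ⟨f, p, q, hf, hp, hq, hs⟩ := aux_stein g hg M hM hg2
  set c := ∫ t, g t ∂(gaussianReal 0 1)
  have cf : Continuous f := continuous_iff_continuousAt.2 fun t => (hf t).continuousAt
  have cp : Continuous p := continuous_iff_continuousAt.2 fun t => (hp t).continuousAt
  have cg : Continuous g := hg.continuous
  have h1 : ∫ e, g (∑ i, e i * a i) ∂(radPi ι) - c
      = ∑ j, ∫ e, ((a j)^2 * ((p (∑ i, e i * a i) + p (∑ i, e i * a i - 2 * (e j * a j))) / 2)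
        - (e j * a j) * (f (∑ i, e i * a i) - f (∑ i, e i * a i - 2 * (e j * a j))) / 2)
          ∂(radPi ι) := by
    have e1 : ∫ e, g (∑ i, e i * a i) ∂(radPi ι) - c
        = ∫ e, (p (∑ i, e i * a i) - (∑ i, e i * a i) * f (∑ i, e i * a i)) ∂(radPi ι) := by
      simp only [hs]
      rw [integral_sub (aux_radPi_int _ (by fun_prop)) (integrable_const _)]
      simp
    have e2 : ∫ e, (p (∑ i, e i * a i) - (∑ i, e i * a i) * f (∑ i, e i * a i)) ∂(radPi ι)
        = ∑ j, ∫ e, ((a j)^2 * p (∑ i, e i * a i) - (e j * a j) * f (∑ i, e i * a i))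
          ∂(radPi ι) := by
      rw [← integral_finsetSum _ (fun j _ => aux_radPi_int _ (by fun_prop))]
      congr 1
      funext e
      rw [Finset.sum_sub_distrib, ← Finset.sum_mul, ← Finset.sum_mul, ha, one_mul]
    rw [e1, e2]
    refine Finset.sum_congr rfl fun j _ => ?_
    rw [integral_sub (aux_radPi_int _ (by fun_prop)) (aux_radPi_int _ (by fun_prop)),
      integral_sub (aux_radPi_int _ (by fun_prop)) (aux_radPi_int _ (by fun_prop)),
      aux_sym2 j a f cf, integral_const_mul, integral_const_mul, aux_sym1 j a p cp]
  rw [h1, Finset.mul_sum]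
  refine (Finset.abs_sum_le_sum_abs _ _).trans (Finset.sum_le_sum fun j _ => ?_)
  rw [← norm_eq_abs]
  have := norm_integral_le_of_norm_le_const (μ := radPi ι) (C := (2 + √2) * |a j|^3)
    (f := fun e => ((a j)^2 * ((p (∑ i, e i * a i) + p (∑ i, e i * a i - 2 * (e j * a j))) / 2)
        - (e j * a j) * (f (∑ i, e i * a i) - f (∑ i, e i * a i - 2 * (e j * a j))) / 2)) ?_
  · simpa using this
  · filter_upwards [aux_radPi_ae ι] with e he
    have t := aux_trap f p q _ hf hp hq (∑ i, e i * a i - e j * a j) (e j * a j)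
    set S := ∑ i, e i * a i
    rw [sub_add_cancel, show S - e j * a j - e j * a j = S - 2 * (e j * a j) by ring] at t
    have ej : |e j| = 1 := by rw [← sq_eq_sq₀ (abs_nonneg _) (by norm_num), sq_abs, he]; norm_num
    have hh : (a j)^2 = (e j * a j)^2 := by rw [mul_pow, he, one_mul]
    have habs : |e j * a j| = |a j| := by rw [abs_mul, ej, one_mul]
    rw [norm_eq_abs, hh, ← habs]
    set h := e j * a j
    have : h^2 * ((p S + p (S - 2*h))/2) - h * (f S - f (S - 2*h))/2
       = -(h/2) * (f S - f (S - 2*h) - h * (p S + p (S-2*h))) := by ring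
    rw [this, abs_mul, abs_neg, abs_div, abs_two]
    calc _ ≤ |h|/2 * (2 * (2 + √2) * h^2) := by gcongr
      _ = _ := by rw [← sq_abs h]; ring

/-- Stein bound for Rademacher sums -/
lemma aux_clt {ι : Type} [Fintype ι] (a : ι → ℝ) (σ : ℝ) (hσ : 0 < σ) (ha : ∑ i, a i ^ 2 = σ^2)
    (g : ℝ → ℝ) (hg : Differentiable ℝ g)
    (hM : ∀ t, |g t| ≤ 1) (hg2 : ∀ t, |deriv g t| ≤ 1) :
    |∫ e, g (∑ i, e i * a i) ∂(radPi ι) - ∫ t, g (σ * t) ∂(gaussianReal 0 1)|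
      ≤ (2 + √2) * (∑ i, |a i| ^ 3) / σ^2 := by
  have h := aux_clt1 (fun i => a i / σ) (by simp_rw [div_pow]; rw [← Finset.sum_div, ha]; field_simp)
    (fun t => g (σ * t) / σ) (by fun_prop) (1/σ)
    (fun t => by rw [abs_div, abs_of_pos hσ]; gcongr; exact hM _)
    (fun t => by
      have d : HasDerivAt (fun t => g (σ * t) / σ) (deriv g (σ * t)) t := by
        have := ((hg (σ*t)).hasDerivAt.comp t ((hasDerivAt_id t).const_mul σ)).div_const σ
        convert! this using 1; field_simp
      rw [d.deriv]; exact hg2 _)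
  have e1 : ∀ e : ι → ℝ, σ * ∑ i, e i * (a i / σ) = ∑ i, e i * a i := fun e => by
    rw [Finset.mul_sum]; exact Finset.sum_congr rfl fun i _ => by field_simp
  simp only [e1] at h
  rw [integral_div, integral_div, ← sub_div, abs_div, abs_of_pos hσ, div_le_iff₀ hσ] at h
  refine h.trans (le_of_eq ?_)
  simp_rw [abs_div, abs_of_pos hσ, div_pow]
  rw [← Finset.sum_div]
  field_simp

lemma aux_mom2 {ι : Type} [Fintype ι] (a : ι → ℝ) :
    ∫ e, (∑ i, e i * a i)^2 ∂(radPi ι) = ∑ i, a i ^ 2 := by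
  have : ∫ e, (∑ i, e i * a i)^2 ∂(radPi ι)
      = ∑ j, ∫ e, (e j * a j) * (∑ i, e i * a i) ∂(radPi ι) := by
    rw [← integral_finsetSum _ (fun j _ => aux_radPi_int _ (by fun_prop))]
    congr 1; funext e
    rw [← Finset.sum_mul, sq]
  rw [this]
  refine Finset.sum_congr rfl fun j _ => ?_
  rw [aux_sym2 j a (fun t => t) continuous_id]
  have : ∫ e, (a j)^2 ∂(radPi ι) = (a j)^2 := by simp
  rw [← this]
  apply integral_congr_ae
  filter_upwards [aux_radPi_ae ι] with e he
  have := he j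
  linear_combination (a j)^2 * this

lemma aux_mom4 {ι : Type} [Fintype ι] (a : ι → ℝ) :
    ∫ e, (∑ i, e i * a i)^4 ∂(radPi ι) ≤ 3 * (∑ i, a i ^ 2)^2 := by
  have : ∫ e, (∑ i, e i * a i)^4 ∂(radPi ι)
      = ∑ j, ∫ e, (e j * a j) * (∑ i, e i * a i)^3 ∂(radPi ι) := by
    rw [← integral_finsetSum _ (fun j _ => aux_radPi_int _ (by fun_prop))]
    congr 1; funext e
    rw [← Finset.sum_mul]; ring
  rw [this]
  have : 3 * (∑ i, a i ^ 2)^2 = ∑ j, 3 * a j ^2 * ∫ e, (∑ i, e i * a i)^2 ∂(radPi ι) := by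
    rw [aux_mom2, ← Finset.sum_mul, ← Finset.mul_sum]; ring
  rw [this]
  refine Finset.sum_le_sum fun j _ => ?_
  rw [aux_sym2 j a (fun t => t^3) (by fun_prop), aux_sym1 j a (fun t => t^2) (by fun_prop),
    ← integral_const_mul]
  apply integral_mono_ae (aux_radPi_int _ (by fun_prop)) (aux_radPi_int _ (by fun_prop))
  filter_upwards [aux_radPi_ae ι] with e he
  have hh : (a j)^2 = (e j * a j)^2 := by rw [mul_pow, he, one_mul]
  rw [hh]
  set S := ∑ i, e i * a i
  set h := e j * a j
  nlinarith [sq_nonneg (h^2)]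

lemma aux_mom3 {ι : Type} [Fintype ι] (a : ι → ℝ) (s : ℝ) (hs : 0 < s) (ha : ∑ i, a i ^ 2 = s^2) :
    ∫ e, |∑ i, e i * a i|^3 ∂(radPi ι) ≤ √3 * s^3 := by
  have h3 : √3 * √3 = 3 := by norm_num
  have p3 : 0 < √3 := by positivity
  calc _ ≤ ∫ e, ((√3 * s / 2) * (∑ i, e i * a i)^2 + (1/(2 * √3 * s)) * (∑ i, e i * a i)^4)
          ∂(radPi ι) := by
        apply integral_mono (aux_radPi_int _ (by fun_prop)) (aux_radPi_int _ (by fun_prop))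
        intro e
        beta_reduce
        set S := ∑ i, e i * a i
        have e2 : S^2 = |S|^2 := (sq_abs S).symm
        have e4 : S^4 = |S|^4 := by rw [← abs_pow]; exact (abs_of_nonneg (by positivity)).symm
        rw [e2, e4]
        set T := |S|
        have hT : 0 ≤ T := abs_nonneg _
        have : (√3 * s / 2) * T^2 + (1/(2 * √3 * s)) * T^4 - T^3
            = T^2 / (2 * √3 * s) * (T - √3 * s)^2 := by
          field_simp; ring
        have : 0 ≤ T^2 / (2 * √3 * s) * (T - √3 * s)^2 := by positivity
        linarith
    _ = (√3 * s / 2) * s^2 + (1/(2 * √3 * s)) * ∫ e, (∑ i, e i * a i)^4 ∂(radPi ι) := by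
        rw [integral_add (aux_radPi_int _ (by fun_prop)) (aux_radPi_int _ (by fun_prop)),
          integral_const_mul, integral_const_mul, aux_mom2, ha]
    _ ≤ (√3 * s / 2) * s^2 + (1/(2 * √3 * s)) * (3 * (s^2)^2) := by
        gcongr
        rw [← ha]; exact aux_mom4 a
    _ = √3 * s^3 := by
        field_simp
        linear_combination (-1 : ℝ) * h3

lemma aux_had_sq (n : ℕ) (i j : Fin (2^n)) : (hadamardMatrix n i j)^2 = 1 / 2^n := by
  simp only [hadamardMatrix, Matrix.of_apply, div_pow, ← pow_mul]
  rw [mul_comm, pow_mul, Real.sq_sqrt (by positivity)]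
  simp

lemma aux_had_orth (n : ℕ) (k l : Fin (2^n)) (hkl : k ≠ l) :
    ∑ j, hadamardMatrix n j k * hadamardMatrix n j l = 0 := by
  obtain ⟨m, hm⟩ : ∃ m : Fin n, (k : ℕ).testBit m ≠ (l : ℕ).testBit m := by
    by_contra hcon
    push Not at hcon
    apply hkl
    apply Fin.ext
    apply Nat.eq_of_testBit_eq
    intro i
    by_cases hi : i < n
    · exact hcon ⟨i, hi⟩
    · have : 2^n ≤ 2^i := Nat.pow_le_pow_right (by norm_num) (by omega)
      rw [Nat.testBit_lt_two_pow (k.2.trans_le this), Nat.testBit_lt_two_pow (l.2.trans_le this)]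
  have hlt : ∀ j : Fin (2^n), (j : ℕ) ^^^ 2^(m:ℕ) < 2^n := fun j =>
    Nat.xor_lt_two_pow j.2 (Nat.pow_lt_pow_right (by norm_num) m.2)
  let τ : Fin (2^n) → Fin (2^n) := fun j => ⟨(j : ℕ) ^^^ 2^(m:ℕ), hlt j⟩
  have hτ : Function.Involutive τ := fun j => by
    apply Fin.ext
    simp [τ]
  have entry : ∀ j r : Fin (2^n), hadamardMatrix n (τ j) r
      = (if (r:ℕ).testBit m then -1 else 1) * hadamardMatrix n j r := by
    intro j r
    simp only [hadamardMatrix, Matrix.of_apply]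
    rw [← mul_div_assoc]
    congr 1
    simp only [← Finset.prod_pow_eq_pow_sum]
    rw [← Finset.mul_prod_erase _ _ (Finset.mem_univ m),
      ← Finset.mul_prod_erase (a := m) (f := fun k : Fin n => (-1:ℝ)^(((j : ℕ).testBit k).toNat * ((r : ℕ).testBit k).toNat)) _ (Finset.mem_univ m), ← mul_assoc]
    congr 1
    · simp only [τ, Nat.testBit_xor, Nat.testBit_two_pow_self]
      cases (j:ℕ).testBit m <;> cases (r:ℕ).testBit m <;> simp
    · refine Finset.prod_congr rfl fun i hi => ?_
      have : (m:ℕ) ≠ i := fun h => (Finset.ne_of_mem_erase hi) (Fin.ext h.symm)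
      simp [τ, Nat.testBit_xor, Nat.testBit_two_pow_of_ne this]
  have hs : ∑ j, hadamardMatrix n j k * hadamardMatrix n j l
      = ∑ j, - (hadamardMatrix n j k * hadamardMatrix n j l) := by
    rw [← Equiv.sum_comp hτ.toPerm]
    refine Finset.sum_congr rfl fun j _ => ?_
    simp only [Function.Involutive.coe_toPerm, entry]
    revert hm
    cases (k:ℕ).testBit m <;> cases (l:ℕ).testBit m <;> simp
  rw [Finset.sum_neg_distrib] at hs
  linarith

lemma aux_had_norm (n : ℕ) (v : Fin (2^n) → ℝ) :
    ∑ j, (∑ k, hadamardMatrix n j k * v k)^2 = ∑ k, v k ^2 := by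
  have : ∀ j, (∑ k, hadamardMatrix n j k * v k)^2
      = ∑ k, ∑ l, (hadamardMatrix n j k * hadamardMatrix n j l) * (v k * v l) := by
    intro j
    rw [sq, Finset.sum_mul_sum]
    exact Finset.sum_congr rfl fun k _ => Finset.sum_congr rfl fun l _ => by ring
  simp_rw [this]
  rw [Finset.sum_comm]
  refine Finset.sum_congr rfl fun k _ => ?_
  rw [Finset.sum_comm]
  simp_rw [← Finset.sum_mul]
  rw [Finset.sum_eq_single k]
  · simp_rw [← sq, aux_had_sq]
    simp
  · intro l _ hl
    rw [aux_had_orth n k l hl.symm, zero_mul]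
  · simp

lemma aux_gauss {ι : Type} [Fintype ι] [DecidableEq ι] (x : EuclideanSpace ℝ ι) (g : ℝ → ℝ) (hg : Continuous g) :
    ∫ v : ι → ℝ, g (∑ j, v j * x j) ∂(Measure.pi fun _ : ι => gaussianReal 0 1)
      = ∫ t, g (‖x‖ * t) ∂(gaussianReal 0 1) := by
  have h1 : (stdGaussian (EuclideanSpace ℝ ι)).map (innerSL ℝ x)
      = gaussianReal 0 (‖x‖^2).toNNReal := by
    rw [IsGaussian.map_eq_gaussianReal, integral_strongDual_stdGaussian, variance_dual_stdGaussian,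
      innerSL_apply_norm]
  have h2 : (gaussianReal 0 1).map (fun t => ‖x‖ * t) = gaussianReal 0 (‖x‖^2).toNNReal := by
    rw [gaussianReal_map_const_mul]
    congr 1
    · simp
    · rw [mul_one]; ext; simp
  have h3 : ∫ t, g (‖x‖ * t) ∂(gaussianReal 0 1) = ∫ t, g t ∂(gaussianReal 0 (‖x‖^2).toNNReal) := by
    rw [← h2, integral_map (by fun_prop) hg.aestronglyMeasurable]
  rw [h3, ← h1, integral_map (by fun_prop) hg.aestronglyMeasurable, ← map_pi_eq_stdGaussian,
    integral_map (by fun_prop) (by fun_prop)]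
  congr 1

lemma aux_matrix (n : ℕ) (x : EuclideanSpace ℝ (Fin (2 ^ n))) (i : Fin (2^n))
    (e1 e2 : Fin (2 ^ n) → ℝ) :
    ((Real.sqrt (2 ^ n) • (hadamardMatrix n * Matrix.diagonal e1 *
                hadamardMatrix n * Matrix.diagonal e2)).mulVec x i)
    = ∑ j, e1 j * (√(2^n) * hadamardMatrix n i j * ∑ k, e2 k * (hadamardMatrix n j k * x k)) := by
  rw [Matrix.smul_mulVec, Pi.smul_apply, ← Matrix.mulVec_mulVec, ← Matrix.mulVec_mulVec,
    ← Matrix.mulVec_mulVec]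
  simp only [Matrix.mulVec, dotProduct, Matrix.diagonal_apply, smul_eq_mul, ite_mul, zero_mul,
    Finset.sum_ite_eq, Finset.mem_univ, if_true]
  rw [Finset.mul_sum]
  refine Finset.sum_congr rfl fun j _ => ?_
  have : ∑ k, e2 k * (hadamardMatrix n j k * x k) = ∑ k, hadamardMatrix n j k * (e2 k * x k) :=
    Finset.sum_congr rfl fun k _ => by ring
  rw [this]; ring

lemma aux_each (n : ℕ) (x : EuclideanSpace ℝ (Fin (2 ^ n))) (hx : 0 < ‖x‖)
    (g : ℝ → ℝ) (hg : Differentiable ℝ g)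
    (hg1 : ∀ t, |g t| ≤ 1) (hg2 : ∀ t, |deriv g t| ≤ 1) (i : Fin (2^n)) :
    |(∫ t, g (‖x‖ * t) ∂(gaussianReal 0 1)) -
      ∫ ε : (Fin (2 ^ n) → ℝ) × (Fin (2 ^ n) → ℝ),
          g (∑ j, ε.1 j * (√(2^n) * hadamardMatrix n i j *
            ∑ k, ε.2 k * (hadamardMatrix n j k * x k)))
          ∂((radPi (Fin (2^n))).prod (radPi (Fin (2^n))))|
      ≤ 6 * ‖x‖ / Real.sqrt (2 ^ n) := by
  set c := ∫ t, g (‖x‖ * t) ∂(gaussianReal 0 1)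
  set μ := radPi (Fin (2^n)) with hμ
  have cg := hg.continuous
  have hint : Integrable (fun ε : (Fin (2 ^ n) → ℝ) × (Fin (2 ^ n) → ℝ) =>
          g (∑ j, ε.1 j * (√(2^n) * hadamardMatrix n i j *
            ∑ k, ε.2 k * (hadamardMatrix n j k * x k)))) (μ.prod μ) :=
    Integrable.of_bound (Continuous.aestronglyMeasurable (by fun_prop)) 1 (ae_of_all _ fun _ => hg1 _)
  rw [integral_prod_symm _ hint]
  have hint2 := hint.integral_prod_right
  have hc : c - ∫ e2, ∫ e1, g (∑ j, e1 j * (√(2^n) * hadamardMatrix n i j *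
            ∑ k, e2 k * (hadamardMatrix n j k * x k))) ∂μ ∂μ
      = ∫ e2, (c - ∫ e1, g (∑ j, e1 j * (√(2^n) * hadamardMatrix n i j *
            ∑ k, e2 k * (hadamardMatrix n j k * x k))) ∂μ) ∂μ := by
    rw [integral_sub (integrable_const _) hint2]; simp
  have hxs : ∑ k, x k ^ 2 = ‖x‖^2 := (EuclideanSpace.real_norm_sq_eq x).symm
  have sd : 0 < √((2:ℝ)^n) := by positivity
  have sd2 : √((2:ℝ)^n)^2 = 2^n := Real.sq_sqrt (by positivity)
  rw [hc]
  calc _ ≤ ∫ e2, |c - ∫ e1, g (∑ j, e1 j * (√(2^n) * hadamardMatrix n i j *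
            ∑ k, e2 k * (hadamardMatrix n j k * x k))) ∂μ| ∂μ := abs_integral_le_integral_abs
    _ ≤ ∫ e2, (2 + √2) / ‖x‖^2 * ∑ j, |∑ k, e2 k * (hadamardMatrix n j k * x k)|^3 ∂μ := by
      apply integral_mono_of_nonneg (ae_of_all _ fun _ => abs_nonneg _)
        (aux_radPi_int _ (by fun_prop))
      filter_upwards [aux_radPi_ae (Fin (2^n))] with e2 he2
      rw [abs_sub_comm]
      have hsq : ∀ j, (√(2^n) * hadamardMatrix n i j)^2 = 1 := fun j => by
        rw [mul_pow, aux_had_sq, sd2]; field_simp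
      have habs : ∀ j, |√(2^n) * hadamardMatrix n i j| = 1 := fun j => by
        rw [← sq_eq_sq₀ (abs_nonneg _) (by norm_num), sq_abs, hsq]; norm_num
      refine (aux_clt _ ‖x‖ hx ?_ g hg hg1 hg2).trans (le_of_eq ?_)
      · simp_rw [mul_pow _ (∑ k, e2 k * _), hsq, one_mul]
        have := aux_had_norm n (fun k => e2 k * x k)
        simp_rw [mul_pow, he2, one_mul] at this
        rw [← hxs, ← this]
        exact Finset.sum_congr rfl fun j _ => by
          congr 1; exact Finset.sum_congr rfl fun k _ => by ring
      · simp_rw [abs_mul _ (∑ k, e2 k * _), habs, one_mul]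
        ring
    _ = (2 + √2) / ‖x‖^2 * ∑ j, ∫ e2, |∑ k, e2 k * (hadamardMatrix n j k * x k)|^3 ∂μ := by
      rw [integral_const_mul, integral_finsetSum _ (fun j _ => aux_radPi_int _ (by fun_prop))]
    _ ≤ (2 + √2) / ‖x‖^2 * ∑ j : Fin (2^n), √3 * (‖x‖ / √(2^n))^3 := by
      gcongr with j
      apply aux_mom3 _ _ (by positivity)
      simp_rw [mul_pow, aux_had_sq]
      rw [← Finset.mul_sum, hxs, div_pow, sd2]; ring
    _ = ((2 + √2) * √3) * ‖x‖ / √(2^n) := by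
      rw [Finset.sum_const, Finset.card_univ, Fintype.card_fin, nsmul_eq_mul]
      push_cast
      generalize √((2:ℝ)^n) = r at sd sd2 ⊢
      rw [← sd2]
      field_simp
    _ ≤ 6 * ‖x‖ / √(2^n) := by
      have a1 : √2 ≤ 1.4143 := by rw [Real.sqrt_le_left (by norm_num)]; norm_num
      have a2 : √3 ≤ 1.7321 := by rw [Real.sqrt_le_left (by norm_num)]; norm_num
      have : (2 + √2) * √3 ≤ 6 := by nlinarith [Real.sqrt_nonneg 2, Real.sqrt_nonneg 3]
      gcongr

theorem stmt_12 (n : ℕ) (x : EuclideanSpace ℝ (Fin (2 ^ n)))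
    (g : ℝ → ℝ) (hg : Differentiable ℝ g)
    (hg1 : ∀ t, |g t| ≤ 1) (hg2 : ∀ t, |deriv g t| ≤ 1) :
    |(1 / (2 ^ n : ℝ)) * ∑ i : Fin (2 ^ n),
        (∫ G : Fin (2 ^ n) → Fin (2 ^ n) → ℝ, g ((Matrix.of G).mulVec x i)
          ∂(Measure.pi fun _ : Fin (2 ^ n) => Measure.pi fun _ : Fin (2 ^ n) => gaussianReal 0 1))
      - (1 / (2 ^ n : ℝ)) * ∑ i : Fin (2 ^ n),
        (∫ ε : (Fin (2 ^ n) → ℝ) × (Fin (2 ^ n) → ℝ),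
          g ((Real.sqrt (2 ^ n) •
              (hadamardMatrix n * Matrix.diagonal ε.1 *
                hadamardMatrix n * Matrix.diagonal ε.2)).mulVec x i)
          ∂((Measure.pi fun _ : Fin (2 ^ n) => rademacher).prod
              (Measure.pi fun _ : Fin (2 ^ n) => rademacher)))|
      ≤ 6 * ‖x‖ / Real.sqrt (2 ^ n) := by
  have cg := hg.continuous
  have hG : ∀ i : Fin (2^n), ∫ G : Fin (2 ^ n) → Fin (2 ^ n) → ℝ, g ((Matrix.of G).mulVec x i)
          ∂(Measure.pi fun _ : Fin (2 ^ n) => Measure.pi fun _ : Fin (2 ^ n) => gaussianReal 0 1)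
      = ∫ t, g (‖x‖ * t) ∂(gaussianReal 0 1) := fun i => by
    rw [← aux_gauss x g cg]
    have mp := measurePreserving_eval (fun _ : Fin (2 ^ n) =>
      Measure.pi fun _ : Fin (2 ^ n) => gaussianReal 0 1) i
    conv_rhs => rw [← mp.map_eq]
    rw [integral_map mp.measurable.aemeasurable (Continuous.aestronglyMeasurable (by fun_prop))]
    rfl
  simp_rw [hG, aux_matrix]
  change |_ - (1 / (2 ^ n : ℝ)) * ∑ i : Fin (2 ^ n), (∫ ε : (Fin (2 ^ n) → ℝ) × (Fin (2 ^ n) → ℝ), _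
    ∂((radPi (Fin (2^n))).prod (radPi (Fin (2^n)))))| ≤ _
  rcases eq_or_lt_of_le (norm_nonneg x) with hx | hx
  · have : x = 0 := norm_eq_zero.1 hx.symm
    subst this
    simp
  rw [← mul_sub, ← Finset.sum_sub_distrib, abs_mul, abs_of_pos (by positivity)]
  calc _ ≤ 1 / (2^n : ℝ) * ∑ i : Fin (2^n), 6 * ‖x‖ / Real.sqrt (2 ^ n) := by
        gcongr
        refine (Finset.abs_sum_le_sum_abs _ _).trans (Finset.sum_le_sum fun i _ => ?_)
        exact aux_each n x hx g hg hg1 hg2 i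
    _ = _ := by
        rw [Finset.sum_const, Finset.card_univ, Fintype.card_fin, nsmul_eq_mul]
        push_cast
        field_simp
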